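/- Let T : V → V be ℝ-linear with T∘J = −J∘T, Tᵗ = T, and 1 − T² positive definite, and let f_T(u) := exp(¼⟨u,Tu⟩). With the boson field (φ(v)F)(u) := −√2·i·(½⟨u,v⟩·F(u) − (DF)(u)(v)), for all u, v ∈ V: φ(v)f_T(u) = −(i/√2)·(⟨u,v⟩ − ⟨u,Tv⟩)·f_T(u), and consequently ½(φ(Tv) − i·φ(J(Tv)) + φ(v) + i·φ(Jv)) applied to f_T vanishes identically on V (i.e., the Gaussian f_T lies in the out-vacuum sector: a_J†(Tv)f_T + a_J(v)f_T = 0). -/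

import Mathlib

/-!
Antilinearity of `T` together with its symmetry makes `(u, w) ↦ ⟨u, T w⟩` a symmetric complex-valued
real-bilinear form (`cInner_map_comm`), so the derivative of `¼⟨u, T u⟩` in the direction `v` is
`½⟨u, T v⟩`; this gives the formula for `φ(v) f_T`. The vanishing statement is then linear algebra:
writing `g(w) = ⟨u, w⟩ - ⟨u, T w⟩`, the identities `⟨u, J w⟩ = i⟨u, w⟩` and `T J = -J T` give
`g(T v) - i g(J T v) = 2⟨u, T v⟩` and `g(v) + i g(J v) = -2⟨u, T v⟩`.
-/

open scoped RealInnerProductSpace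

/-- The complex scalar product `⟨u,v⟩ := d(u,v) + i·d(Ju,v)` on `V` (antilinear in `u`)
associated to the complex structure `J`. -/
noncomputable def cInner {V : Type*} [NormedAddCommGroup V] [InnerProductSpace ℝ V]
    (J : Module.End ℝ V) (u v : V) : ℂ :=
  Complex.ofReal ⟪u, v⟫ + Complex.ofReal ⟪J u, v⟫ * Complex.I

/-- The boson field operator
`(φ(v)F)(u) := −√2·i·(½⟨u,v⟩·F(u) − (DF)(u)(v))`, where `(DF)(u)` is the real Fréchet
derivative of `F` at `u`. -/
noncomputable def bosonField {V : Type*} [NormedAddCommGroup V] [InnerProductSpace ℝ V]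
    (J : Module.End ℝ V) (v : V) (F : V → ℂ) : V → ℂ :=
  fun u => -(Real.sqrt 2 : ℂ) * Complex.I *
    ((2⁻¹ : ℂ) * cInner J u v * F u - fderiv ℝ F u v)

section

variable {V : Type*} [NormedAddCommGroup V] [InnerProductSpace ℝ V]

lemma inner_J_right {J : Module.End ℝ V} (hJ2 : J * J = -1)
    (hJd : ∀ u v : V, ⟪J u, J v⟫ = ⟪u, v⟫) (u v : V) : ⟪u, J v⟫ = -⟪J u, v⟫ := by
  have h : J (J v) = -v := by simpa using LinearMap.congr_fun hJ2 v
  rw [← hJd u (J v), h, inner_neg_right]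

lemma cInner_J_right {J : Module.End ℝ V} (hJ2 : J * J = -1)
    (hJd : ∀ u v : V, ⟪J u, J v⟫ = ⟪u, v⟫) (u v : V) :
    cInner J u (J v) = Complex.I * cInner J u v := by
  simp only [cInner, inner_J_right hJ2 hJd u v, hJd]
  push_cast
  linear_combination -(Complex.ofReal ⟪J u, v⟫) * Complex.I_mul_I

lemma cInner_neg_right (J : Module.End ℝ V) (u v : V) :
    cInner J u (-v) = -cInner J u v := by
  simp only [cInner, inner_neg_right]
  push_cast
  ring

/-- A symmetric `T` anticommuting with `J` makes the complex-valued pairing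
`⟨u, T v⟩` symmetric, because `J T` is then self-adjoint for the real inner product as well. -/
lemma cInner_map_comm {J T : Module.End ℝ V} (hJ2 : J * J = -1)
    (hJd : ∀ u v : V, ⟪J u, J v⟫ = ⟪u, v⟫) (hTJ : ∀ v, T (J v) = -J (T v))
    (hT : ∀ u v : V, ⟪T u, v⟫ = ⟪u, T v⟫) (u v : V) :
    cInner J v (T u) = cInner J u (T v) := by
  have h1 : ⟪v, T u⟫ = ⟪u, T v⟫ := by rw [← hT, real_inner_comm]
  have h2 : ⟪J v, T u⟫ = ⟪J u, T v⟫ := by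
    rw [← hT, hTJ, inner_neg_left, real_inner_comm, inner_J_right hJ2 hJd, neg_neg]
  simp only [cInner, h1, h2]

lemma hasFDerivAt_inner_map [FiniteDimensional ℝ V] (A B : Module.End ℝ V) (u : V) :
    ∃ L : V →L[ℝ] ℝ, HasFDerivAt (fun w => ⟪A w, B w⟫) L u ∧
      ∀ v, L v = ⟪A u, B v⟫ + ⟪A v, B u⟫ :=
  ⟨_, (LinearMap.toContinuousLinearMap A).hasFDerivAt.inner ℝ
    (LinearMap.toContinuousLinearMap B).hasFDerivAt, fun v => by simp⟩

lemma fderiv_gaussian [FiniteDimensional ℝ V] (J T : Module.End ℝ V) (u v : V) :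
    fderiv ℝ (fun u => Complex.exp ((4⁻¹ : ℂ) * cInner J u (T u))) u v =
      Complex.exp ((4⁻¹ : ℂ) * cInner J u (T u)) *
        ((4⁻¹ : ℂ) * (cInner J u (T v) + cInner J v (T u))) := by
  obtain ⟨L₁, h₁, e₁⟩ := hasFDerivAt_inner_map 1 T u
  obtain ⟨L₂, h₂, e₂⟩ := hasFDerivAt_inner_map J T u
  have k₁ := Complex.ofRealCLM.hasFDerivAt.comp u h₁
  have k₂ := (Complex.ofRealCLM.hasFDerivAt.comp u h₂).mul_const Complex.I
  have h := ((k₁.add k₂).const_mul (4⁻¹ : ℂ)).cexp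
  have h' := h.fderiv
  refine (DFunLike.congr_fun h' v).trans ?_
  simp [cInner, e₁, e₂]
  ring

end

/-- Let `T : V → V` be ℝ-linear with `T∘J = −J∘T`, `Tᵗ = T`, and
`1 − T²` positive definite, and let `f_T(u) := exp(¼⟨u,Tu⟩)`.  Then for all `u, v ∈ V`:
`φ(v)f_T(u) = −(i/√2)·(⟨u,v⟩ − ⟨u,Tv⟩)·f_T(u)`, and consequently
`½(φ(Tv) − i·φ(J(Tv)) + φ(v) + i·φ(Jv))` applied to `f_T` vanishes identically on `V`
(i.e. `a_J†(Tv)f_T + a_J(v)f_T = 0`: the Gaussian `f_T` lies in the out-vacuum sector). -/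
theorem stmt_19 {V : Type*} [NormedAddCommGroup V] [InnerProductSpace ℝ V]
    [FiniteDimensional ℝ V] (m : ℕ) (hdim : Module.finrank ℝ V = 2 * m)
    (J : Module.End ℝ V) (hJ2 : J * J = -1)
    (hJd : ∀ u v : V, ⟪J u, J v⟫ = ⟪u, v⟫)
    (T : Module.End ℝ V)
    (hTJ : T * J = -(J * T)) (hTsym : LinearMap.adjoint T = T)
    (hTpos : ∀ v : V, v ≠ 0 → 0 < ⟪v, (1 - T * T) v⟫)
    (fT : V → ℂ) (hfT : fT = fun u => Complex.exp ((4⁻¹ : ℂ) * cInner J u (T u))) :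
    (∀ u v : V, bosonField J v fT u =
      -(Complex.I / (Real.sqrt 2 : ℂ)) * (cInner J u v - cInner J u (T v)) * fT u) ∧
    (∀ u v : V, (2⁻¹ : ℂ) *
      (bosonField J (T v) fT u - Complex.I * bosonField J (J (T v)) fT u +
        bosonField J v fT u + Complex.I * bosonField J (J v) fT u) = 0) := by
  have hJT : ∀ v, T (J v) = -J (T v) := fun v => by simpa using LinearMap.congr_fun hTJ v
  have hT : ∀ u v : V, ⟪T u, v⟫ = ⟪u, T v⟫ := fun u v => by
    rw [← LinearMap.adjoint_inner_right, hTsym]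
  have hs : (Real.sqrt 2 : ℂ) ≠ 0 := by simp
  have hs2 : (Real.sqrt 2 : ℂ) * (Real.sqrt 2 : ℂ) = 2 := by
    rw [← Complex.ofReal_mul, Real.mul_self_sqrt zero_le_two]
    norm_num
  have key : ∀ u v : V, bosonField J v fT u =
      -(Complex.I / (Real.sqrt 2 : ℂ)) * (cInner J u v - cInner J u (T v)) * fT u := by
    intro u v
    subst hfT
    simp only [bosonField, fderiv_gaussian, cInner_map_comm hJ2 hJd hJT hT u v]
    generalize Complex.exp _ = E
    field_simp
    linear_combination (-4 * E * (cInner J u v - cInner J u (T v))) * hs2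
  refine ⟨key, fun u v => ?_⟩
  simp only [key, hJT, cInner_neg_right, cInner_J_right hJ2 hJd]
  generalize cInner J u (T (T v)) = c
  generalize cInner J u (T v) = b
  generalize cInner J u v = a
  generalize Complex.I / (Real.sqrt 2 : ℂ) = k
  linear_combination (2⁻¹ * k * fT u * (c - a)) * Complex.I_mul_I
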